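/- For all (u_1,u_2,u_3) with u_1,u_3 ∈ (0,1) and u_2 ∈ [0,1], the mixed second partial derivative of the three-dimensional vine copula C with respect to u_1 and u_3 satisfies ∂²C(u_1,u_2,u_3)/∂u_1∂u_3 = ∫_0^{u_2} c_{13;2}( C_{1|2}(u_1|v_2), C_{3|2}(u_3|v_2) ) · c_{23}(v_2,u_3) · c_{12}(u_1,v_2) dv_2. -/

import Mathlib

/-!
Fubini moves the integral over `v₃` outermost and the fundamental theorem of calculus removes it; a
second application of the fundamental theorem removes the integral over `v₁`. Both need the
integrand to be continuous beyond the box of integration, so it is first replaced by its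
composition with the clamping map onto the unit cube, which changes none of the integrals.
-/

noncomputable section

/-- The density of a bivariate copula: the mixed second partial derivative `∂²C/∂s∂t`. -/
def copDens (C : ℝ × ℝ → ℝ) (s t : ℝ) : ℝ :=
  deriv (fun a => deriv (fun b => C (a, b)) t) s

/-- The conditional distribution function `C_{1|2}(u₁|u₂) = ∂C₁₂(u₁,u₂)/∂u₂`. -/
def cond12 (C12 : ℝ × ℝ → ℝ) (u1 u2 : ℝ) : ℝ :=
  deriv (fun b => C12 (u1, b)) u2

/-- The conditional distribution function `C_{3|2}(u₃|u₂) = ∂C₂₃(u₂,u₃)/∂u₂`. -/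
def cond32 (C23 : ℝ × ℝ → ℝ) (u3 u2 : ℝ) : ℝ :=
  deriv (fun a => C23 (a, u3)) u2

/-- `∂₁C(x,y) = ∂C(x,y)/∂x`. -/
def pdFst (C : ℝ × ℝ → ℝ) (x y : ℝ) : ℝ := deriv (fun a => C (a, y)) x

/-- `∂₃C(x,y) = ∂C(x,y)/∂y` (derivative in the second argument). -/
def pdSnd (C : ℝ × ℝ → ℝ) (x y : ℝ) : ℝ := deriv (fun b => C (x, b)) y

/-- The three-dimensional vine copula built from the pair copulas `C₁₂, C₂₃, C₁₃;₂`: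
`C(u₁,u₂,u₃) = ∫₀^{u₁}∫₀^{u₂}∫₀^{u₃} c₁₂(v₁,v₂) c₂₃(v₂,v₃)
  c₁₃;₂(C_{1|2}(v₁|v₂), C_{3|2}(v₃|v₂)) dv₃ dv₂ dv₁`. -/
def vine (C12 C23 C132 : ℝ × ℝ → ℝ) (u1 u2 u3 : ℝ) : ℝ :=
  ∫ v1 in (0:ℝ)..u1, ∫ v2 in (0:ℝ)..u2, ∫ v3 in (0:ℝ)..u3,
    copDens C12 v1 v2 * copDens C23 v2 v3 *
      copDens C132 (cond12 C12 v1 v2) (cond32 C23 v3 v2)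

section PartialDerivatives

variable {𝕜 E F : Type*} [NontriviallyNormedField 𝕜]
  [NormedAddCommGroup E] [NormedSpace 𝕜 E] [NormedAddCommGroup F] [NormedSpace 𝕜 F]
  {m n : WithTop ℕ∞}

theorem contDiffOn_deriv_fst {f : 𝕜 × E → F} {U : Set (𝕜 × E)} (hf : ContDiffOn 𝕜 n f U)
    (hU : IsOpen U) (hmn : m + 1 ≤ n) :
    ContDiffOn 𝕜 m (fun p : 𝕜 × E => deriv (fun x => f (x, p.2)) p.1) U := by
  have hfderiv : ContDiffOn 𝕜 m (fun p => fderiv 𝕜 f p (1, 0)) U :=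
    (hf.fderiv_of_isOpen hU hmn).clm_apply contDiffOn_const
  refine hfderiv.congr fun p hp => ?_
  have hfp : HasFDerivAt f (fderiv 𝕜 f p) (p.1, p.2) :=
    ((hf.contDiffAt (hU.mem_nhds hp)).differentiableAt (by rintro rfl; simp at hmn)).hasFDerivAt
  exact (hfp.comp_hasDerivAt p.1 ((hasDerivAt_id p.1).prodMk (hasDerivAt_const p.1 p.2))).deriv

theorem contDiffOn_deriv_snd {f : E × 𝕜 → F} {U : Set (E × 𝕜)} (hf : ContDiffOn 𝕜 n f U)
    (hU : IsOpen U) (hmn : m + 1 ≤ n) :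
    ContDiffOn 𝕜 m (fun p : E × 𝕜 => deriv (fun y => f (p.1, y)) p.2) U := by
  have hfderiv : ContDiffOn 𝕜 m (fun p => fderiv 𝕜 f p (0, 1)) U :=
    (hf.fderiv_of_isOpen hU hmn).clm_apply contDiffOn_const
  refine hfderiv.congr fun p hp => ?_
  have hfp : HasFDerivAt f (fderiv 𝕜 f p) (p.1, p.2) :=
    ((hf.contDiffAt (hU.mem_nhds hp)).differentiableAt (by rintro rfl; simp at hmn)).hasFDerivAt
  exact (hfp.comp_hasDerivAt p.2 ((hasDerivAt_const p.2 p.1).prodMk (hasDerivAt_id p.2))).deriv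

end PartialDerivatives

section Clamp

variable {α β : Type*} [TopologicalSpace α] [TopologicalSpace β]

instance instContinuousSupProd [Max α] [Max β] [ContinuousSup α] [ContinuousSup β] :
    ContinuousSup (α × β) where
  continuous_sup := (continuous_fst.fst.sup continuous_snd.fst).prodMk
    (continuous_fst.snd.sup continuous_snd.snd)

instance instContinuousInfProd [Min α] [Min β] [ContinuousInf α] [ContinuousInf β] :
    ContinuousInf (α × β) where
  continuous_inf := (continuous_fst.fst.inf continuous_snd.fst).prodMk
    (continuous_fst.snd.inf continuous_snd.snd)

theorem exists_continuous_eqOn_Icc [Lattice α] [ContinuousSup α] [ContinuousInf α] {f : α → β}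
    {l r : α} (hlr : l ≤ r) (hf : ContinuousOn f (Set.Icc l r)) :
    ∃ g : α → β, Continuous g ∧ Set.EqOn f g (Set.Icc l r) := by
  refine ⟨fun x => f (l ⊔ x ⊓ r), ?_, fun x hx => ?_⟩
  · exact hf.comp_continuous (by fun_prop) fun x => ⟨le_sup_left, sup_le hlr inf_le_right⟩
  · simp only [inf_eq_left.2 hx.2, sup_eq_right.2 hx.1]

end Clamp

section BoxIntegral

open Set Filter Topology MeasureTheory

variable {E : Type*} [NormedAddCommGroup E] [NormedSpace ℝ E]

theorem intervalIntegral_swap_of_continuous {f : ℝ → ℝ → E} (hf : Continuous f.uncurry)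
    (a b c d : ℝ) :
    ∫ x in a..b, ∫ y in c..d, f x y = ∫ y in c..d, ∫ x in a..b, f x y := by
  refine intervalIntegral_intervalIntegral_swap ?_
  exact (hf.continuousOn.integrableOn_compact (isCompact_uIcc.prod isCompact_uIcc)).mono_set
    (prod_mono uIoc_subset_uIcc uIoc_subset_uIcc)

theorem hasDerivAt_intervalIntegral_primitive [CompleteSpace E] {f : ℝ → ℝ → E}
    (hf : Continuous f.uncurry) (a b c t : ℝ) :
    HasDerivAt (fun u => ∫ x in a..b, ∫ y in c..u, f x y) (∫ x in a..b, f x t) t := by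
  have hcont : Continuous fun y => ∫ x in a..b, f x y := by fun_prop
  simp only [intervalIntegral_swap_of_continuous hf]
  exact (hcont.integral_hasStrictDerivAt c t).hasDerivAt

/-- The iterated integral of `f` over the oriented box with opposite corners `a` and `b`, the
third variable being integrated first. It is the common form of the integrals that define vine
copulas. -/
def boxIntegral (f : ℝ × ℝ × ℝ → E) (a b : ℝ × ℝ × ℝ) : E :=
  ∫ x in a.1..b.1, ∫ y in a.2.1..b.2.1, ∫ z in a.2.2..b.2.2, f (x, y, z)

theorem boxIntegral_congr {f g : ℝ × ℝ × ℝ → E} {a b : ℝ × ℝ × ℝ} (h : EqOn f g (uIcc a b)) :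
    boxIntegral f a b = boxIntegral g a b := by
  refine intervalIntegral.integral_congr fun x hx => intervalIntegral.integral_congr fun y hy =>
    intervalIntegral.integral_congr fun z hz => h ?_
  simp only [uIcc_prod_eq]
  exact ⟨hx, hy, hz⟩

theorem hasDerivAt_boxIntegral [CompleteSpace E] {f : ℝ × ℝ × ℝ → E} (hf : Continuous f)
    (a : ℝ × ℝ × ℝ) (u₁ u₂ u₃ : ℝ) :
    HasDerivAt (fun c => boxIntegral f a (u₁, u₂, c))
      (∫ x in a.1..u₁, ∫ y in a.2.1..u₂, f (x, y, u₃)) u₃ := by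
  have hswap (c x : ℝ) : ∫ y in a.2.1..u₂, ∫ z in a.2.2..c, f (x, y, z) =
      ∫ z in a.2.2..c, ∫ y in a.2.1..u₂, f (x, y, z) :=
    intervalIntegral_swap_of_continuous (f := fun y z => f (x, y, z)) (by fun_prop) ..
  simp only [boxIntegral, hswap]
  exact hasDerivAt_intervalIntegral_primitive
    (f := fun x z => ∫ y in a.2.1..u₂, f (x, y, z)) (by fun_prop) ..

theorem hasDerivAt_deriv_boxIntegral [CompleteSpace E] {f : ℝ × ℝ × ℝ → E} (hf : Continuous f)
    (a : ℝ × ℝ × ℝ) (u₁ u₂ u₃ : ℝ) :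
    HasDerivAt (fun b => deriv (fun c => boxIntegral f a (b, u₂, c)) u₃)
      (∫ y in a.2.1..u₂, f (u₁, y, u₃)) u₁ := by
  have hcont : Continuous fun x => ∫ y in a.2.1..u₂, f (x, y, u₃) := by fun_prop
  simp only [(hasDerivAt_boxIntegral hf a _ u₂ u₃).deriv]
  exact (hcont.integral_hasStrictDerivAt a.1 u₁).hasDerivAt

variable {f g : ℝ × ℝ × ℝ → E} {l r a : ℝ × ℝ × ℝ} {u₁ u₂ u₃ : ℝ}

theorem boxIntegral_eventuallyEq (hfg : EqOn f g (Icc l r)) (ha : a ∈ Icc l r)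
    (h₁ : u₁ ∈ Icc l.1 r.1) (h₂ : u₂ ∈ Icc l.2.1 r.2.1) (h₃ : u₃ ∈ Ioo l.2.2 r.2.2) :
    (fun c => boxIntegral f a (u₁, u₂, c)) =ᶠ[𝓝 u₃] fun c => boxIntegral g a (u₁, u₂, c) := by
  filter_upwards [Icc_mem_nhds h₃.1 h₃.2] with c hc
  have hb : (u₁, u₂, c) ∈ Icc l r := ⟨⟨h₁.1, h₂.1, hc.1⟩, h₁.2, h₂.2, hc.2⟩
  exact boxIntegral_congr (hfg.mono (uIcc_subset_Icc ha hb))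

variable [CompleteSpace E]

theorem differentiableAt_boxIntegral_of_continuousOn (hf : ContinuousOn f (Icc l r))
    (ha : a ∈ Icc l r) (h₁ : u₁ ∈ Icc l.1 r.1) (h₂ : u₂ ∈ Icc l.2.1 r.2.1)
    (h₃ : u₃ ∈ Ioo l.2.2 r.2.2) :
    DifferentiableAt ℝ (fun c => boxIntegral f a (u₁, u₂, c)) u₃ := by
  obtain ⟨g, hg, hfg⟩ := exists_continuous_eqOn_Icc (ha.1.trans ha.2) hf
  exact (hasDerivAt_boxIntegral hg a u₁ u₂ u₃).differentiableAt.congr_of_eventuallyEq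
    (boxIntegral_eventuallyEq hfg ha h₁ h₂ h₃)

theorem hasDerivAt_deriv_boxIntegral_of_continuousOn (hf : ContinuousOn f (Icc l r))
    (ha : a ∈ Icc l r) (h₁ : u₁ ∈ Ioo l.1 r.1) (h₂ : u₂ ∈ Icc l.2.1 r.2.1)
    (h₃ : u₃ ∈ Ioo l.2.2 r.2.2) :
    HasDerivAt (fun b => deriv (fun c => boxIntegral f a (b, u₂, c)) u₃)
      (∫ y in a.2.1..u₂, f (u₁, y, u₃)) u₁ := by
  obtain ⟨g, hg, hfg⟩ := exists_continuous_eqOn_Icc (ha.1.trans ha.2) hf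
  have hderiv : (fun b => deriv (fun c => boxIntegral f a (b, u₂, c)) u₃) =ᶠ[𝓝 u₁]
      fun b => deriv (fun c => boxIntegral g a (b, u₂, c)) u₃ := by
    filter_upwards [Icc_mem_nhds h₁.1 h₁.2] with b hb
    exact (boxIntegral_eventuallyEq hfg ha hb h₂ h₃).deriv_eq
  have hslice : ∫ y in a.2.1..u₂, f (u₁, y, u₃) = ∫ y in a.2.1..u₂, g (u₁, y, u₃) := by
    refine intervalIntegral.integral_congr fun y hy => hfg ?_
    have hy' : y ∈ Icc l.2.1 r.2.1 := uIcc_subset_Icc ⟨ha.1.2.1, ha.2.2.1⟩ h₂ hy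
    exact ⟨⟨h₁.1.le, hy'.1, h₃.1.le⟩, h₁.2.le, hy'.2, h₃.2.le⟩
  rw [hslice]
  exact (hasDerivAt_deriv_boxIntegral hg a u₁ u₂ u₃).congr_of_eventuallyEq hderiv

end BoxIntegral

section Vine

variable {C C12 C23 C132 : ℝ × ℝ → ℝ} {U V W : Set (ℝ × ℝ)}

theorem continuousOn_cond12 (hC : ContDiffOn ℝ 1 C U) (hU : IsOpen U) :
    ContinuousOn (fun p : ℝ × ℝ => cond12 C p.1 p.2) U :=
  (contDiffOn_deriv_snd (m := 0) hC hU (by simp)).continuousOn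

theorem continuousOn_cond32 (hC : ContDiffOn ℝ 1 C U) (hU : IsOpen U) :
    ContinuousOn (fun p : ℝ × ℝ => cond32 C p.2 p.1) U :=
  (contDiffOn_deriv_fst (m := 0) hC hU (by simp)).continuousOn

theorem continuousOn_copDens (hC : ContDiffOn ℝ 2 C U) (hU : IsOpen U) :
    ContinuousOn (fun p : ℝ × ℝ => copDens C p.1 p.2) U :=
  (contDiffOn_deriv_fst (m := 0)
    (contDiffOn_deriv_snd (m := 1) hC hU one_add_one_eq_two.le) hU (by simp)).continuousOn

/-- The density of the vine copula with pair copulas `C₁₂`, `C₂₃`, `C₁₃;₂`: the integrand of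
`vine`, as a function of the triple `(v₁, v₂, v₃)`. -/
def vineDens (C12 C23 C132 : ℝ × ℝ → ℝ) (v : ℝ × ℝ × ℝ) : ℝ :=
  copDens C12 v.1 v.2.1 * copDens C23 v.2.1 v.2.2 *
    copDens C132 (cond12 C12 v.1 v.2.1) (cond32 C23 v.2.2 v.2.1)

theorem vine_eq_boxIntegral (u1 u2 u3 : ℝ) :
    vine C12 C23 C132 u1 u2 u3 = boxIntegral (vineDens C12 C23 C132) 0 (u1, u2, u3) :=
  rfl

theorem continuousOn_vineDens {S : Set (ℝ × ℝ × ℝ)}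
    (h12 : ContDiffOn ℝ 2 C12 U) (hU : IsOpen U) (hSU : ∀ v ∈ S, (v.1, v.2.1) ∈ U)
    (h23 : ContDiffOn ℝ 2 C23 V) (hV : IsOpen V) (hSV : ∀ v ∈ S, v.2 ∈ V)
    (h132 : ContDiffOn ℝ 2 C132 W) (hW : IsOpen W)
    (hSW : ∀ v ∈ S, (cond12 C12 v.1 v.2.1, cond32 C23 v.2.2 v.2.1) ∈ W) :
    ContinuousOn (vineDens C12 C23 C132) S := by
  have hcond12 : ContinuousOn (fun v : ℝ × ℝ × ℝ => cond12 C12 v.1 v.2.1) S :=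
    (continuousOn_cond12 (h12.of_le one_le_two) hU).comp (by fun_prop) hSU
  have hcond32 : ContinuousOn (fun v : ℝ × ℝ × ℝ => cond32 C23 v.2.2 v.2.1) S :=
    (continuousOn_cond32 (h23.of_le one_le_two) hV).comp (by fun_prop) hSV
  exact (((continuousOn_copDens h12 hU).comp (by fun_prop) hSU).mul
    ((continuousOn_copDens h23 hV).comp (by fun_prop) hSV)).mul
      ((continuousOn_copDens h132 hW).comp (hcond12.prodMk hcond32) hSW)

theorem vine_partial_u1_u3_general
    (h12 : ContDiffOn ℝ 2 C12 U) (hU : IsOpen U) (hsubU : Set.Icc 0 1 ⊆ U)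
    (h23 : ContDiffOn ℝ 2 C23 V) (hV : IsOpen V) (hsubV : Set.Icc 0 1 ⊆ V)
    (h132 : ContDiffOn ℝ 2 C132 W) (hW : IsOpen W)
    (hcond : ∀ v1 ∈ Set.Icc (0 : ℝ) 1, ∀ v2 ∈ Set.Icc (0 : ℝ) 1, ∀ v3 ∈ Set.Icc (0 : ℝ) 1,
      (cond12 C12 v1 v2, cond32 C23 v3 v2) ∈ W)
    {u1 u2 u3 : ℝ} (hu1 : u1 ∈ Set.Ioo (0 : ℝ) 1) (hu2 : u2 ∈ Set.Icc (0 : ℝ) 1)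
    (hu3 : u3 ∈ Set.Ioo (0 : ℝ) 1) :
    (∀ a ∈ Set.Icc (0 : ℝ) 1, DifferentiableAt ℝ (fun c => vine C12 C23 C132 a u2 c) u3) ∧
    HasDerivAt (fun a => deriv (fun c => vine C12 C23 C132 a u2 c) u3)
      (∫ v2 in (0 : ℝ)..u2, copDens C132 (cond12 C12 u1 v2) (cond32 C23 u3 v2) *
        copDens C23 v2 u3 * copDens C12 u1 v2) u1 := by
  have hdens : ContinuousOn (vineDens C12 C23 C132) (Set.Icc 0 1) :=
    continuousOn_vineDens h12 hU (fun v hv => hsubU ⟨⟨hv.1.1, hv.1.2.1⟩, hv.2.1, hv.2.2.1⟩)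
      h23 hV (fun v hv => hsubV ⟨hv.1.2, hv.2.2⟩)
      h132 hW (fun v hv => hcond v.1 ⟨hv.1.1, hv.2.1⟩ v.2.1 ⟨hv.1.2.1, hv.2.2.1⟩
        v.2.2 ⟨hv.1.2.2, hv.2.2.2⟩)
  have hzero : (0 : ℝ × ℝ × ℝ) ∈ Set.Icc 0 1 := ⟨le_rfl, zero_le_one⟩
  have hfactors (v2 : ℝ) : copDens C132 (cond12 C12 u1 v2) (cond32 C23 u3 v2) *
      copDens C23 v2 u3 * copDens C12 u1 v2 = vineDens C12 C23 C132 (u1, v2, u3) := by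
    simp only [vineDens]
    ring
  simp only [vine_eq_boxIntegral, hfactors]
  exact ⟨fun a ha => differentiableAt_boxIntegral_of_continuousOn hdens hzero ha hu2 hu3,
    hasDerivAt_deriv_boxIntegral_of_continuousOn hdens hzero hu1 hu2 hu3⟩

end Vine

/-- ∂²C(u₁,u₂,u₃)/∂u₁∂u₃ = ∫₀^{u₂} c₁₃;₂(C_{1|2}(u₁|v₂), C_{3|2}(u₃|v₂)) ⬝ c₂₃(v₂,u₃) ⬝ c₁₂(u₁,v₂) dv₂. -/
theorem vine_partial_u1_u3
    (C12 C23 C132 : ℝ × ℝ → ℝ)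
    (U : Set (ℝ × ℝ)) (hU : IsOpen U)
    (hUsub : Set.Icc ((0 : ℝ), (0 : ℝ)) (1, 1) ⊆ U)
    (h12 : ContDiffOn ℝ 2 C12 U) (h23 : ContDiffOn ℝ 2 C23 U)
    (h132 : ContDiffOn ℝ 2 C132 U)
    (hb12 : ∀ t ∈ Set.Icc (0:ℝ) 1, C12 (0, t) = 0 ∧ C12 (t, 0) = 0)
    (hb23 : ∀ t ∈ Set.Icc (0:ℝ) 1, C23 (0, t) = 0 ∧ C23 (t, 0) = 0)
    (hb132 : ∀ t ∈ Set.Icc (0:ℝ) 1, C132 (0, t) = 0 ∧ C132 (t, 0) = 0)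
    (hr12 : ∀ u1 ∈ Set.Icc (0:ℝ) 1, ∀ u2 ∈ Set.Icc (0:ℝ) 1,
      cond12 C12 u1 u2 ∈ Set.Icc (0:ℝ) 1)
    (hr32 : ∀ u3 ∈ Set.Icc (0:ℝ) 1, ∀ u2 ∈ Set.Icc (0:ℝ) 1,
      cond32 C23 u3 u2 ∈ Set.Icc (0:ℝ) 1)
    (u1 u2 u3 : ℝ) (hu1 : u1 ∈ Set.Ioo (0:ℝ) 1) (hu2 : u2 ∈ Set.Icc (0:ℝ) 1)
    (hu3 : u3 ∈ Set.Ioo (0:ℝ) 1) :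
    deriv (fun a => deriv (fun c => vine C12 C23 C132 a u2 c) u3) u1 =
      ∫ v2 in (0:ℝ)..u2,
        copDens C132 (cond12 C12 u1 v2) (cond32 C23 u3 v2) * copDens C23 v2 u3 *
          copDens C12 u1 v2 := by
  exact (vine_partial_u1_u3_general h12 hU hUsub h23 hU hUsub h132 hU
    (fun v1 h1 v2 h2 v3 h3 => hUsub <|
      (Set.Icc_prod_Icc 0 1 0 1).subset ⟨hr12 v1 h1 v2 h2, hr32 v3 h3 v2 h2⟩) hu1 hu2 hu3).2.deriv

end
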